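/- Let M be an endo-AIP right R-module with S = End_R(M). If S is a local ring, then S is a prime ring. -/

import Mathlib

/-- A submodule `N` of `M` is *fully invariant* if it is stable under every
endomorphism of `M`. -/
def IsFullyInvariant {R M : Type*} [Ring R] [AddCommGroup M] [Module R M]
    (N : Submodule R M) : Prop :=
  ∀ φ : Module.End R M, ∀ n ∈ N, φ n ∈ N

/-- `M` is a *centrally endo-AIP* module: for every fully invariant submodule `N`
of `M`, the left annihilator of `N` in `S = End_R(M)` is a centrally s-unital
ideal of `S`, i.e. every `φ` annihilating `N` satisfies `φ * ψ = φ` for some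
central element `ψ` of `S` annihilating `N`. -/
def IsCentrallyEndoAIP (R M : Type*) [Ring R] [AddCommGroup M] [Module R M] : Prop :=
  ∀ N : Submodule R M, IsFullyInvariant N →
    ∀ φ : Module.End R M, (∀ n ∈ N, φ n = 0) →
      ∃ ψ : Module.End R M, (∀ n ∈ N, ψ n = 0) ∧
        (∀ g : Module.End R M, ψ * g = g * ψ) ∧ φ * ψ = φ

/-- `M` is an *endo-AIP* module: for every fully invariant submodule `N` of `M`,
the left annihilator of `N` in `S = End_R(M)` is a right s-unital ideal of `S`. -/
def IsEndoAIP (R M : Type*) [Ring R] [AddCommGroup M] [Module R M] : Prop :=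
  ∀ N : Submodule R M, IsFullyInvariant N →
    ∀ φ : Module.End R M, (∀ n ∈ N, φ n = 0) →
      ∃ ψ : Module.End R M, (∀ n ∈ N, ψ n = 0) ∧ φ * ψ = φ

/-- A ring `S` is a *(left) centrally AIP* ring: the left annihilator of every
two-sided ideal of `S` is a centrally s-unital ideal of `S`. -/
def IsCentrallyAIPRing (S : Type*) [Ring S] : Prop :=
  ∀ I : TwoSidedIdeal S, ∀ a : S, (∀ x ∈ I, a * x = 0) →
    ∃ z : S, (∀ x ∈ I, z * x = 0) ∧ (∀ s : S, z * s = s * z) ∧ a * z = a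

/-- The fully invariant core of a submodule `P`, that is, the largest fully invariant submodule
contained in `P`. The core of `ker a` contains `b M` for every `b` with `a S b = 0`, so the endo-AIP
condition applied to it gives an element `ψ` that depends on `a` alone. -/
def fullyInvariantCore {R M : Type*} [Semiring R] [AddCommMonoid M] [Module R M]
    (P : Submodule R M) : Submodule R M :=
  ⨅ φ : Module.End R M, P.comap φ

section Semiring

variable {R M : Type*} [Semiring R] [AddCommMonoid M] [Module R M]

theorem mem_fullyInvariantCore {P : Submodule R M} {m : M} :
    m ∈ fullyInvariantCore P ↔ ∀ φ : Module.End R M, φ m ∈ P :=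
  Submodule.mem_iInf _

theorem fullyInvariantCore_le (P : Submodule R M) : fullyInvariantCore P ≤ P :=
  fun _ hm => mem_fullyInvariantCore.mp hm 1

theorem range_le_fullyInvariantCore_ker_iff {a b : Module.End R M} :
    LinearMap.range b ≤ fullyInvariantCore (LinearMap.ker a) ↔
      ∀ s : Module.End R M, a * s * b = 0 := by
  constructor
  · intro hb s
    ext m
    exact mem_fullyInvariantCore.mp (hb ⟨m, rfl⟩) s
  · rintro hab _ ⟨m, rfl⟩
    exact mem_fullyInvariantCore.mpr fun s => LinearMap.congr_fun (hab s) m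

end Semiring

section Ring

variable {R M : Type*} [Ring R] [AddCommGroup M] [Module R M]

theorem isFullyInvariant_fullyInvariantCore (P : Submodule R M) :
    IsFullyInvariant (fullyInvariantCore P) :=
  fun φ _ hm => mem_fullyInvariantCore.mpr fun s => mem_fullyInvariantCore.mp hm (s * φ)

theorem IsEndoAIP.exists_mul_eq_self_and_forall_mul_eq_zero (h : IsEndoAIP R M)
    (a : Module.End R M) :
    ∃ ψ : Module.End R M, a * ψ = a ∧
      ∀ b : Module.End R M, (∀ s : Module.End R M, a * s * b = 0) → ψ * b = 0 := by
  obtain ⟨ψ, hψ, haψ⟩ := h _ (isFullyInvariant_fullyInvariantCore (LinearMap.ker a)) a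
    (fullyInvariantCore_le (LinearMap.ker a))
  refine ⟨ψ, haψ, fun b hab => ?_⟩
  ext m
  exact hψ _ (range_le_fullyInvariantCore_ker_iff.mpr hab ⟨m, rfl⟩)

end Ring

theorem eq_zero_or_eq_zero_of_mul_eq_self_of_mul_eq_zero {S : Type*} [Ring S] [IsLocalRing S]
    {a b x : S} (hax : a * x = a) (hxb : x * b = 0) : a = 0 ∨ b = 0 := by
  rcases IsLocalRing.isUnit_or_isUnit_of_add_one (add_sub_cancel x 1) with hx | hx
  · exact Or.inr (hx.mul_right_eq_zero.mp hxb)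
  · have ha : a * (1 - x) = 0 := by rw [mul_sub, mul_one, hax, sub_self]
    exact Or.inl (hx.mul_left_eq_zero.mp ha)

/-- If `M` is an endo-AIP module whose endomorphism ring `S` is local,
then `S` is a prime ring. -/
theorem stmt_18 (R M : Type*) [Ring R] [AddCommGroup M] [Module R M]
    (h : IsEndoAIP R M) (hlocal : IsLocalRing (Module.End R M)) :
    ∀ a b : Module.End R M, (∀ s : Module.End R M, a * s * b = 0) → a = 0 ∨ b = 0 := by
  intro a b hab
  obtain ⟨ψ, haψ, hψ⟩ := h.exists_mul_eq_self_and_forall_mul_eq_zero a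
  exact eq_zero_or_eq_zero_of_mul_eq_self_of_mul_eq_zero haψ (hψ b hab)
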